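/- arXiv:2101.11410 — 3 statements merged into one kernel-verified Lean document; each statement's English description precedes it below -/
import Mathlib

section
/- Let W be a complex Hilbert space, A = B(W) the C*-algebra of bounded linear operators on W, and M a Hilbert C*-module over A. Let ε > 0 and let q̂ ∈ M satisfy ‖q̂‖_M > ε and assume ⟨q̂, q̂⟩ is a compact operator on W. Then there exists b̂ ∈ A with ‖b̂‖_A < 1/ε such that q := q̂ b̂ is normalized (⟨q,q⟩ ≠ 0 and ⟨q,q⟩² = ⟨q,q⟩), and there exists b ∈ A such that ‖q̂ − q b‖_M ≤ ε. -/
/-- A (right) Hilbert C*-module over a C*-algebra `A`: a right `A`-module `M` with an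
`A`-valued inner product, `A`-linear in the second variable, satisfying the listed axioms,
whose norm is `‖u‖ = ‖⟨u,u⟩‖^(1/2)` (so that completeness of `M` as a normed group is
completeness for this norm). -/
structure HilbertCStarModule (A : Type*) (M : Type*) [CStarAlgebra A] [PartialOrder A]
    [StarOrderedRing A] [NormedAddCommGroup M] where
  smul : M → A → M
  inner : M → M → A
  add_smul : ∀ (u v : M) (c : A), smul (u + v) c = smul u c + smul v c
  smul_add : ∀ (u : M) (c d : A), smul u (c + d) = smul u c + smul u d
  smul_mul : ∀ (u : M) (c d : A), smul u (c * d) = smul (smul u c) d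
  smul_one : ∀ u : M, smul u 1 = u
  inner_add_right : ∀ u v w : M, inner u (v + w) = inner u v + inner u w
  inner_smul_right : ∀ (u v : M) (c : A), inner u (smul v c) = inner u v * c
  star_inner : ∀ u v : M, star (inner u v) = inner v u
  inner_self_nonneg : ∀ u : M, 0 ≤ inner u u
  inner_self_eq_zero : ∀ u : M, inner u u = 0 → u = 0
  norm_eq : ∀ u : M, ‖u‖ = Real.sqrt ‖inner u u‖

open Module.End in
lemma aux_finite_spectrum {W : Type*} [NormedAddCommGroup W] [InnerProductSpace ℂ W]
    [CompleteSpace W] (a : W →L[ℂ] W) (ha : IsSelfAdjoint a) (hc : IsCompactOperator ⇑a)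
    (c : ℝ) (hc0 : 0 < c) : {x : ℝ | x ∈ spectrum ℝ a ∧ c < x}.Finite := by
  by_contra hinf
  have hinf : {x : ℝ | x ∈ spectrum ℝ a ∧ c < x}.Infinite := hinf
  let l := hinf.natEmbedding
  have hev : ∀ n, ∃ v : W, ‖v‖ = 1 ∧ a v = ((l n : ℝ) : ℂ) • v := by
    intro n
    have h1 := (l n).2.1
    have h2 := (l n).2.2
    have h3 : (((l n : ℝ)) : ℂ) ∈ spectrum ℂ a := by
      simpa using spectrum.algebraMap_mem ℂ h1
    have h4 : (((l n : ℝ)) : ℂ) ≠ 0 := by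
      have : (l n : ℝ) ≠ 0 := by linarith
      exact_mod_cast this
    obtain ⟨v, hv⟩ := ((hc.hasEigenvalue_iff_mem_spectrum h4).2 h3).exists_hasEigenvector
    have hv0 := hv.2
    have hv1 : a v = ((l n : ℝ) : ℂ) • v := hv.apply_eq_smul
    refine ⟨((‖v‖⁻¹ : ℝ) : ℂ) • v, ?_, ?_⟩
    · have : ‖v‖ ≠ 0 := by simpa using hv0
      rw [norm_smul]
      simp [this]
    · rw [map_smul, hv1, smul_comm]
  choose v hv1 hv2 using hev
  have horth : ∀ n m, n ≠ m → inner ℂ (v n) (v m) = 0 := by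
    intro n m hnm
    have h : inner ℂ (a (v n)) (v m) = inner ℂ (v n) (a (v m)) := by
      exact (ContinuousLinearMap.isSelfAdjoint_iff_isSymmetric.1 ha) _ _
    rw [hv2, hv2, inner_smul_left, inner_smul_right, Complex.conj_ofReal] at h
    have hne : ((l n : ℝ) : ℂ) ≠ ((l m : ℝ) : ℂ) := by
      intro h
      apply hnm
      apply l.injective
      apply Subtype.ext
      exact_mod_cast h
    by_contra h0
    exact hne (mul_right_cancel₀ h0 h)
  have hsep : ∀ n m, n ≠ m → c < ‖a (v n) - a (v m)‖ := by
    intro n m hnm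
    have h2 := (l n).2.2
    have h := norm_sub_sq (𝕜 := ℂ) (a (v n)) (a (v m))
    have h0 : inner ℂ (a (v n)) (a (v m)) = 0 := by
      rw [hv2, hv2, inner_smul_left, inner_smul_right, horth n m hnm]; simp
    have h3 : ‖a (v n)‖ = (l n : ℝ) := by
      rw [hv2, norm_smul, hv1, mul_one, Complex.norm_real, Real.norm_of_nonneg (by linarith)]
    rw [h0, h3] at h
    simp only [map_zero, mul_zero, sub_zero] at h
    apply lt_of_pow_lt_pow_left₀ 2 (norm_nonneg _)
    rw [h]
    nlinarith [sq_nonneg ‖a (v m)‖]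
  have hK : IsCompact (closure (Set.image a (Metric.closedBall 0 1))) :=
    hc.isCompact_closure_image_closedBall 1
  obtain ⟨x, -, φ, hφ, hx⟩ := hK.tendsto_subseq (x := fun n => a (v n))
    (fun n => subset_closure ⟨v n, by simp [hv1], rfl⟩)
  obtain ⟨N, hN⟩ := Metric.cauchySeq_iff'.1 hx.cauchySeq c hc0
  have := hN (N+1) (by omega)
  rw [dist_eq_norm] at this
  have h' := hsep (φ (N+1)) (φ N) (fun h => by have := hφ.injective h; omega)
  simp only [Function.comp] at this
  linarith

lemma aux_cont (s : Set ℝ) (c d : ℝ) (hcd : c < d) (hs : ∀ x ∈ s, c < x → d ≤ x) (g k : ℝ → ℝ)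
    (hg : ContinuousOn g (Set.Ici d)) (hk : Continuous k) :
    ContinuousOn (fun x => if c < x then g x else k x) s := by
  have hsub : s ⊆ Set.Iic c ∪ Set.Ici d := by
    intro x hx
    by_cases h : c < x
    · exact Or.inr (hs x hx h)
    · exact Or.inl (not_lt.1 h)
  refine ContinuousOn.mono ?_ hsub
  refine ContinuousOn.union_of_isClosed ?_ ?_ isClosed_Iic isClosed_Ici
  · exact hk.continuousOn.congr fun x hx => if_neg (not_lt.2 hx)
  · exact hg.congr fun x hx => if_pos (lt_of_lt_of_le hcd hx)

/-- The statement about operators. -/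
lemma aux_op {W : Type*} [NormedAddCommGroup W] [InnerProductSpace ℂ W]
    [CompleteSpace W] (a : W →L[ℂ] W) (ha : 0 ≤ a) (hc : IsCompactOperator ⇑a)
    (ε : ℝ) (hε : 0 < ε) (hn : ε ^ 2 < ‖a‖) :
    ∃ f g : W →L[ℂ] W, ‖f‖ < 1 / ε ∧ star f * a * f ≠ 0 ∧
      star f * a * f * (star f * a * f) = star f * a * f ∧
      ‖star (1 - f * g) * a * (1 - f * g)‖ ≤ ε ^ 2 := by
  have hsa : IsSelfAdjoint a := .of_nonneg ha
  have hnt : Nontrivial (W →L[ℂ] W) := by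
    refine ⟨a, 0, ?_⟩
    rintro rfl
    simp at hn
    nlinarith
  have hmem : ‖a‖ ∈ spectrum ℝ a := CStarAlgebra.norm_mem_spectrum_of_nonneg ha
  have hfin := aux_finite_spectrum a hsa hc (ε ^ 2) (by positivity)
  obtain ⟨d, hd, hmin⟩ := Set.exists_min_image _ id hfin ⟨‖a‖, hmem, hn⟩
  have hd' : ε ^ 2 < d := hd.2
  have hs : ∀ x ∈ spectrum ℝ a, ε ^ 2 < x → d ≤ x := fun x hx h => hmin x ⟨hx, h⟩
  have hd0 : 0 < d := lt_trans (by positivity) hd'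
  let F : ℝ → ℝ := fun x => if ε ^ 2 < x then (√x)⁻¹ else 0
  let G : ℝ → ℝ := fun x => if ε ^ 2 < x then √x else 0
  have hF : ContinuousOn F (spectrum ℝ a) := by
    refine aux_cont _ _ d hd' hs _ _ ?_ continuous_const
    refine Real.continuous_sqrt.continuousOn.inv₀ fun x hx => ?_
    exact (Real.sqrt_pos.2 (lt_of_lt_of_le hd0 hx)).ne'
  have hG : ContinuousOn G (spectrum ℝ a) :=
    aux_cont _ _ d hd' hs _ _ Real.continuous_sqrt.continuousOn continuous_const
  have key : ∀ K : ℝ → ℝ, ContinuousOn K (spectrum ℝ a) →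
      star (cfc K a) * a * cfc K a = cfc (fun x => K x * x * K x) a := by
    intro K hK
    have h1 : star (cfc K a) = cfc K a := cfc_predicate K a
    have hid : ContinuousOn (fun x : ℝ => x) (spectrum ℝ a) := continuousOn_id
    rw [h1, cfc_mul (fun x => K x * x) K a (hK.mul hid) hK, cfc_mul K (fun x => x) a hK hid,
      cfc_id' ℝ a]
  have hP : ∀ x, F x * x * F x = if ε ^ 2 < x then 1 else 0 := by
    intro x
    by_cases h : ε ^ 2 < x
    · have hx : 0 < x := lt_trans (by positivity) h
      have h1 := Real.mul_self_sqrt hx.le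
      have h2 := (Real.sqrt_pos.2 hx).ne'
      simp only [F, if_pos h]
      field_simp
      nlinarith
    · simp [F, h]
  have hPc : ContinuousOn (fun x => F x * x * F x) (spectrum ℝ a) :=
    (hF.mul continuousOn_id).mul hF
  refine ⟨cfc F a, cfc G a, ?_, ?_, ?_, ?_⟩
  · apply norm_cfc_lt (by positivity)
    intro x hx
    by_cases h : ε ^ 2 < x
    · simp only [F, if_pos h]
      have : ε < √x := Real.lt_sqrt_of_sq_lt h
      rw [Real.norm_of_nonneg (by positivity), ← one_div]
      exact one_div_lt_one_div_of_lt hε this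
    · simp [F, h, hε]
  · rw [key F hF]
    intro h0
    have := norm_apply_le_norm_cfc (fun x => F x * x * F x) a hmem hPc hsa
    rw [h0] at this
    simp only [hP, if_pos hn] at this
    norm_num at this
  · rw [key F hF, ← cfc_mul _ _ a hPc hPc]
    apply cfc_congr
    intro x hx
    simp only [hP]
    split_ifs <;> simp
  · have hFG : 1 - cfc F a * cfc G a = cfc (fun x => 1 - F x * G x) a := by
      rw [cfc_sub (fun _ => (1:ℝ)) (fun x => F x * G x) a continuousOn_const (hF.mul hG),
        cfc_mul F G a hF hG, cfc_const_one ℝ a]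
    rw [hFG, key (fun x => 1 - F x * G x) (continuousOn_const.sub (hF.mul hG))]
    apply norm_cfc_le (by positivity)
    intro x hx
    have hx0 : 0 ≤ x := spectrum_nonneg_of_nonneg ha hx
    by_cases h : ε ^ 2 < x
    · have hx : 0 < x := lt_trans (by positivity) h
      have h2 := (Real.sqrt_pos.2 hx).ne'
      simp only [F, G, if_pos h, inv_mul_cancel₀ h2]
      simp
      positivity
    · simp only [F, G, if_neg h]
      simp [abs_of_nonneg hx0]
      linarith

/-- **Normalization in Hilbert C*-modules over `B(W)`.** If `‖q̂‖ > ε` and `⟨q̂, q̂⟩` is a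
compact operator, then there is `b̂` with `‖b̂‖ < 1/ε` such that `q = q̂ b̂` is normalized
(`⟨q,q⟩ ≠ 0` and `⟨q,q⟩² = ⟨q,q⟩`), and some `b` with `‖q̂ − q b‖ ≤ ε`. -/
theorem normalization_in_module_over_BW
    {W : Type*} [NormedAddCommGroup W] [InnerProductSpace ℂ W] [CompleteSpace W]
    {M : Type*} [NormedAddCommGroup M] [CompleteSpace M]
    (H : HilbertCStarModule (W →L[ℂ] W) M)
    (ε : ℝ) (hε : 0 < ε) (qhat : M) (hq_norm : ε < ‖qhat‖)
    (h_compact : IsCompactOperator ⇑(H.inner qhat qhat)) :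
    ∃ bhat : W →L[ℂ] W, ‖bhat‖ < 1 / ε ∧
      (H.inner (H.smul qhat bhat) (H.smul qhat bhat) ≠ 0 ∧
        H.inner (H.smul qhat bhat) (H.smul qhat bhat) *
            H.inner (H.smul qhat bhat) (H.smul qhat bhat) =
          H.inner (H.smul qhat bhat) (H.smul qhat bhat)) ∧
      ∃ b : W →L[ℂ] W, ‖qhat - H.smul (H.smul qhat bhat) b‖ ≤ ε := by
  have hn : ε ^ 2 < ‖H.inner qhat qhat‖ := by
    rw [H.norm_eq] at hq_norm
    exact (Real.lt_sqrt hε.le).1 hq_norm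
  obtain ⟨f, g, h1, h2, h3, h4⟩ :=
    aux_op (H.inner qhat qhat) (H.inner_self_nonneg qhat) h_compact ε hε hn
  have key : ∀ c, H.inner (H.smul qhat c) (H.smul qhat c) = star c * H.inner qhat qhat * c := by
    intro c
    rw [H.inner_smul_right, ← H.star_inner, H.inner_smul_right, star_mul, H.star_inner]
  refine ⟨f, h1, ?_, g, ?_⟩
  · rw [key]
    exact ⟨h2, h3⟩
  · have h5 : qhat - H.smul (H.smul qhat f) g = H.smul qhat (1 - f * g) := by
      rw [sub_eq_iff_eq_add, ← H.smul_mul, ← H.smul_add, sub_add_cancel, H.smul_one]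
    rw [h5, H.norm_eq, key]
    exact Real.sqrt_le_iff.2 ⟨hε.le, h4⟩
end

section
/- Let A be a unital C*-algebra, M a Hilbert C*-module over A, and w ∈ M. For c ∈ A write |c|_A = (c*c)^{1/2}. Then |w|_M = ⟨w,w⟩^{1/2} is the supremum in the order of A of the set { |⟨v, w⟩|_A : v ∈ M, ‖v‖_M ≤ 1 }; that is: (i) |⟨v, w⟩|_A ≤ |w|_M for every v ∈ M with ‖v‖_M ≤ 1, and (ii) if a ∈ A satisfies |⟨v, w⟩|_A ≤ a for every v ∈ M with ‖v‖_M ≤ 1, then |w|_M ≤ a. -/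
/-- **The A-valued absolute value as a supremum over the unit ball.** Writing
`|c|_A = CFC.sqrt (star c * c)` for `c : A` and `|w|_M = CFC.sqrt ⟨w,w⟩` for `w : M`, the
element `|w|_M` is the supremum, in the order of `A`, of `{ |⟨v,w⟩|_A : ‖v‖ ≤ 1 }`:
it is an upper bound, and it is below every upper bound. -/
theorem abs_eq_sup_unitBall {A M : Type*} [CStarAlgebra A] [PartialOrder A]
    [StarOrderedRing A] [NormedAddCommGroup M] [CompleteSpace M]
    (H : HilbertCStarModule A M) (w : M) :
    (∀ v : M, ‖v‖ ≤ 1 →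
      CFC.sqrt (star (H.inner v w) * H.inner v w) ≤ CFC.sqrt (H.inner w w)) ∧
    (∀ a : A, (∀ v : M, ‖v‖ ≤ 1 →
        CFC.sqrt (star (H.inner v w) * H.inner v w) ≤ a) →
      CFC.sqrt (H.inner w w) ≤ a) := by
  have hadd : ∀ u v x : M, H.inner (u + v) x = H.inner u x + H.inner v x := fun u v x => by
    rw [← H.star_inner x (u + v), H.inner_add_right, star_add, H.star_inner, H.star_inner]
  have hsm : ∀ (u x : M) (c : A), H.inner (H.smul u c) x = star c * H.inner u x := fun u x c => by
    rw [← H.star_inner x (H.smul u c), H.inner_smul_right, star_mul, H.star_inner]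
  constructor
  · intro v hv
    apply CFC.sqrt_le_sqrt
    have h1 : H.inner v v ≤ 1 := by
      rw [← CStarAlgebra.norm_le_one_iff_of_nonneg _ (H.inner_self_nonneg v)]
      rw [H.norm_eq] at hv
      simpa using hv
    have h2 := H.inner_self_nonneg (w + H.smul v (-(H.inner v w)))
    rw [hadd, H.inner_add_right, H.inner_add_right, H.inner_smul_right, hsm, hsm,
      H.inner_smul_right] at h2
    have h3 := star_left_conjugate_le_conjugate h1 (H.inner v w)
    rw [← H.star_inner v w] at h2
    rw [← sub_nonneg] at h3 ⊢
    have h4 := add_nonneg h2 h3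
    convert h4 using 1
    simp only [star_neg]
    noncomm_ring
  · intro a ha
    have hp := H.inner_self_nonneg w
    have hs : 0 ≤ CFC.sqrt (H.inner w w) := CFC.sqrt_nonneg _
    have hss : CFC.sqrt (H.inner w w) * CFC.sqrt (H.inner w w) = H.inner w w :=
      CFC.sqrt_mul_sqrt_self _ hp
    generalize CFC.sqrt (H.inner w w) = s at hs hss ⊢
    have hsa : IsSelfAdjoint s := .of_nonneg hs
    have hspec : ∀ x ∈ spectrum ℝ s, 0 ≤ x := fun x hx => spectrum_nonneg_of_nonneg hs hx
    have key : ∀ ε : ℝ, 0 < ε → s ≤ a + algebraMap ℝ A ε := by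
      intro ε hε
      have hne : ∀ x ∈ spectrum ℝ s, x + ε ≠ 0 := fun x hx => by
        have := hspec x hx; positivity
      have hc : ContinuousOn (fun x : ℝ => (x + ε)⁻¹) (spectrum ℝ s) :=
        ContinuousOn.inv₀ (by fun_prop) hne
      have hid : cfc (fun x : ℝ => x) s = s := cfc_id' ℝ s
      obtain ⟨t, ht⟩ : ∃ t, t = cfc (fun x : ℝ => (x + ε)⁻¹) s := ⟨_, rfl⟩
      have hts : star t = t := by
        rw [ht]; exact (cfc_predicate (p := IsSelfAdjoint) _ s).star_eq
      have e1 : t * s * s = cfc (fun x : ℝ => (x + ε)⁻¹ * x * x) s := by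
        rw [cfc_mul (fun x : ℝ => (x + ε)⁻¹ * x) (fun x => x) s (by fun_prop) (by fun_prop),
          cfc_mul (fun x : ℝ => (x + ε)⁻¹) (fun x => x) s (by fun_prop) (by fun_prop), hid, ht]
      have e2 : t * s * s * t = cfc (fun x : ℝ => (x + ε)⁻¹ * x * x * (x + ε)⁻¹) s := by
        rw [cfc_mul (fun x : ℝ => (x + ε)⁻¹ * x * x) (fun x => (x + ε)⁻¹) s
          (by fun_prop) (by fun_prop), ← e1, ← ht]
      have hin : H.inner (H.smul w t) w = t * s * s := by
        rw [hsm, hts, ← hss, mul_assoc]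
      have hvv : H.inner (H.smul w t) (H.smul w t) = t * s * s * t := by
        rw [H.inner_smul_right, hin]
      have hv : ‖H.smul w t‖ ≤ 1 := by
        rw [H.norm_eq, Real.sqrt_le_one,
          CStarAlgebra.norm_le_one_iff_of_nonneg _ (H.inner_self_nonneg _), hvv, e2]
        apply cfc_le_one
        intro x hx
        have h0 := hspec x hx
        have : x / (x + ε) ≤ 1 := by rw [div_le_one (by positivity)]; linarith
        have h' : 0 ≤ x / (x + ε) := by positivity
        calc _ = (x / (x + ε)) * (x / (x + ε)) := by ring
          _ ≤ 1 := mul_le_one₀ this h' this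
      have h := ha _ hv
      have hn : 0 ≤ t * s * s := by
        rw [e1]
        apply cfc_nonneg
        intro x hx
        have h0 := hspec x hx
        positivity
      have hab : CFC.sqrt (star (t * s * s) * (t * s * s)) = t * s * s := CFC.abs_of_nonneg _ hn
      rw [hin, hab] at h
      have h5 : s ≤ t * s * s + algebraMap ℝ A ε := by
        rw [e1, ← cfc_add_const ε (fun x : ℝ => (x + ε)⁻¹ * x * x) s (by fun_prop)]
        conv_lhs => rw [← hid]
        apply cfc_mono _ (by fun_prop) (by fun_prop)
        intro x hx
        have h0 := hspec x hx
        have : (x + ε)⁻¹ * x * x + ε - x = ε ^ 2 / (x + ε) := by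
          have := hne x hx
          field_simp
          ring
        have h' : 0 ≤ ε ^ 2 / (x + ε) := by positivity
        linarith
      exact h5.trans (by gcongr)
    have hlim : Filter.Tendsto (fun ε : ℝ => a + algebraMap ℝ A ε)
        (nhdsWithin 0 (Set.Ioi 0)) (nhds a) := by
      have : Continuous (fun ε : ℝ => a + algebraMap ℝ A ε) := by fun_prop
      have h := this.tendsto 0
      simp only [map_zero, add_zero] at h
      exact h.mono_left nhdsWithin_le_nhds
    exact ge_of_tendsto hlim (by filter_upwards [self_mem_nhdsWithin] with ε hε using key ε hε)
end

section
/- Let Ω be a second-countable topological space equipped with its Borel σ-algebra and a finite Borel measure ν, let 𝒴 be a topological space, and let k̃ : 𝒴 × 𝒴 → ℂ be a bounded continuous positive definite kernel. Let X = C(Ω, 𝒴) be the set of continuous maps from Ω to 𝒴 and W = L²(Ω, ν). Then for all x, y ∈ X the formula (k(x,y) w)(s) = ∫_Ω k̃(x(s), y(t)) w(t) dν(t) defines a bounded linear operator k(x,y) on W, and the resulting map k : X × X → B(W) is a B(W)-valued positive definite kernel: k(x,y) = k(y,x)* for all x, y ∈ X, and for every n ∈ ℕ, c_1,…,c_n ∈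 B(W), and x_1,…,x_n ∈ X, the operator Σ_{i,j=1}^n c_i* k(x_i,x_j) c_j is positive. -/
open MeasureTheory

/-- Feature map of a scalar positive definite kernel. -/
theorem exists_feature_map {Y : Type*} (kt : Y → Y → ℂ)
    (h_herm : ∀ u v : Y, kt u v = starRingEnd ℂ (kt v u))
    (h_pd : ∀ (n : ℕ) (α : Fin n → ℂ) (u : Fin n → Y),
      0 ≤ (∑ p, ∑ q, starRingEnd ℂ (α p) * α q * kt (u p) (u q)).re) :
    ∃ (K : Matrix Y Y (ℂ →L[ℂ] ℂ)) (_ : Fact K.PosSemidef) (φ : Y → RKHS.OfKernel K),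
      ∀ u v, inner ℂ (φ u) (φ v) = kt u v := by
  let K : Matrix Y Y (ℂ →L[ℂ] ℂ) := fun u v => kt u v • ContinuousLinearMap.id ℂ ℂ
  have hK : K.PosSemidef := by
    have hiff := (RKHS.posSemidef_tfae (K := K)).out 0 2
    refine hiff.mpr ⟨?_, fun vv => ?_⟩
    · refine Matrix.IsHermitian.ext fun u v => ?_
      change star (kt v u • ContinuousLinearMap.id ℂ ℂ) = kt u v • ContinuousLinearMap.id ℂ ℂ
      rw [star_smul, h_herm u v]
      have : star (ContinuousLinearMap.id ℂ ℂ) = ContinuousLinearMap.id ℂ ℂ := star_one _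
      rw [this]
      rfl
    · let e := vv.support.equivFin
      have h := h_pd vv.support.card (fun p => vv (e.symm p)) (fun p => (e.symm p : Y))
      have h2 : (vv.sum fun x w => vv.sum fun x' w' => inner ℂ (K x' x w) w')
          = ∑ p, ∑ q, starRingEnd ℂ (vv (e.symm p)) * vv (e.symm q) *
            kt (e.symm p) (e.symm q) := by
        rw [Finsupp.sum, ← Finset.sum_coe_sort, ← e.symm.sum_comp]
        refine Finset.sum_congr rfl fun p _ => ?_
        rw [Finsupp.sum, ← Finset.sum_coe_sort, ← e.symm.sum_comp]
        refine Finset.sum_congr rfl fun q _ => ?_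
        rw [h_herm (e.symm p) (e.symm q)]
        simp [K]
        ring
      rw [h2]
      exact h
  refine ⟨K, ⟨hK⟩, ?_⟩
  have : Fact K.PosSemidef := ⟨hK⟩
  refine ⟨fun u => RKHS.kerFun (RKHS.OfKernel K) u 1, fun u v => ?_⟩
  rw [RKHS.kerFun_inner, RKHS.kerFun_apply, RKHS.OfKernel.kernel_ofKernel]
  simp [K]

/-- The feature map is continuous when the kernel is. -/
theorem feature_continuous {Y H : Type*} [TopologicalSpace Y] [NormedAddCommGroup H]
    [InnerProductSpace ℂ H] (kt : Y → Y → ℂ)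
    (h_cont : Continuous fun p : Y × Y => kt p.1 p.2)
    (φ : Y → H) (hφ : ∀ u v, inner ℂ (φ u) (φ v) = kt u v) : Continuous φ := by
  rw [continuous_iff_continuousAt]
  intro u
  have hn : ∀ v, ‖φ v - φ u‖ ^ 2 = (kt v v - kt v u - kt u v + kt u u).re := by
    intro v
    rw [← inner_self_eq_norm_sq (𝕜 := ℂ), inner_sub_left, inner_sub_right, inner_sub_right,
      hφ, hφ, hφ, hφ]
    simp
    ring
  have h1 : Continuous fun v => kt v v := h_cont.comp (continuous_id.prodMk continuous_id)
  have h2 : Continuous fun v => kt v u := h_cont.comp (continuous_id.prodMk continuous_const)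
  have h3 : Continuous fun v => kt u v := h_cont.comp (continuous_const.prodMk continuous_id)
  have h4 : Continuous fun v => Real.sqrt ((kt v v - kt v u - kt u v + kt u u).re) := by
    fun_prop
  have h5 : ∀ v, Real.sqrt ((kt v v - kt v u - kt u v + kt u u).re) = ‖φ v - φ u‖ := by
    intro v
    rw [← hn, Real.sqrt_sq (norm_nonneg _)]
  rw [ContinuousAt, tendsto_iff_norm_sub_tendsto_zero]
  have := h4.tendsto u
  rw [h5 u, sub_self, norm_zero] at this
  simp only [h5] at this
  exact this

/-- The analysis operator `h ↦ (s ↦ ⟪ψ s, h⟫)`. -/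
theorem exists_analysis {Ω H : Type*} [TopologicalSpace Ω] [MeasurableSpace Ω] [BorelSpace Ω]
    (ν : Measure Ω) [IsFiniteMeasure ν] [NormedAddCommGroup H] [InnerProductSpace ℂ H]
    (ψ : Ω → H) (hψ : Continuous ψ) (M : ℝ) (hM : ∀ s, ‖ψ s‖ ≤ M) :
    ∃ A : H →L[ℂ] Lp ℂ 2 ν, ∀ h, ∀ᵐ s ∂ν, (A h : Ω → ℂ) s = inner ℂ (ψ s) h := by
  have hb : ∀ h s, ‖inner ℂ (ψ s) h‖ ≤ M * ‖h‖ := fun h s =>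
    (norm_inner_le_norm _ _).trans (mul_le_mul_of_nonneg_right (hM s) (norm_nonneg _))
  have hmem : ∀ h, MemLp (fun s => inner ℂ (ψ s) h) 2 ν := fun h =>
    MemLp.of_bound (by
      have : Continuous fun s => inner ℂ (ψ s) h := by fun_prop
      exact this.aestronglyMeasurable) (M * ‖h‖) (Filter.Eventually.of_forall (hb h))
  let L : H →ₗ[ℂ] Lp ℂ 2 ν :=
    { toFun := fun h => (hmem h).toLp _
      map_add' := fun h g => by
        rw [← MemLp.toLp_add]
        congr 1
        ext s
        simp
      map_smul' := fun c h => by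
        rw [RingHom.id_apply, ← MemLp.toLp_const_smul]
        congr 1
        ext s
        simp }
  refine ⟨L.mkContinuous ((measureUnivNNReal ν : ℝ) ^ (ENNReal.toReal 2)⁻¹ * max M 0)
    fun h => ?_, fun h => (hmem h).coeFn_toLp⟩
  rw [mul_assoc]
  refine Lp.norm_le_of_ae_bound (by positivity) ?_
  filter_upwards [(hmem h).coeFn_toLp] with s hs
  change ‖((hmem h).toLp _ : Ω → ℂ) s‖ ≤ _
  rw [hs]
  exact (hb h s).trans (mul_le_mul_of_nonneg_right (le_max_left _ _) (norm_nonneg _))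

/-- **The integral-operator-valued positive definite kernel on functional data.** Let `Ω` be a
second-countable topological space with a finite Borel measure `ν`, `Y` a topological space,
and `kt : Y × Y → ℂ` a bounded continuous positive definite kernel. Then for all continuous
`x y : C(Ω, Y)` the formula `(k x y w) s = ∫ kt (x s) (y t) * w t dν t` defines a bounded
linear operator on `W = L²(Ω, ν)`, and the resulting map `k` is a `B(W)`-valued positive
definite kernel: `k x y = (k y x)*` and all `∑ p q, (c p)* k (x p) (x q) (c q)` are positive
operators. -/
theorem integral_operator_valued_pdk
    {Ω : Type*} [TopologicalSpace Ω] [MeasurableSpace Ω] [BorelSpace Ω]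
    [SecondCountableTopology Ω] (ν : Measure Ω) [IsFiniteMeasure ν]
    {Y : Type*} [TopologicalSpace Y]
    (kt : Y → Y → ℂ)
    (h_cont : Continuous fun p : Y × Y => kt p.1 p.2)
    (h_bdd : ∃ C : ℝ, ∀ u v : Y, ‖kt u v‖ ≤ C)
    (h_herm : ∀ u v : Y, kt u v = starRingEnd ℂ (kt v u))
    (h_pd : ∀ (n : ℕ) (α : Fin n → ℂ) (u : Fin n → Y),
      0 ≤ (∑ p, ∑ q, starRingEnd ℂ (α p) * α q * kt (u p) (u q)).re ∧
        (∑ p, ∑ q, starRingEnd ℂ (α p) * α q * kt (u p) (u q)).im = 0) :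
    ∃ k : C(Ω, Y) → C(Ω, Y) → (Lp ℂ 2 ν →L[ℂ] Lp ℂ 2 ν),
      (∀ (x y : C(Ω, Y)) (w : Lp ℂ 2 ν),
        ∀ᵐ s ∂ν, (k x y w : Ω → ℂ) s = ∫ t, kt (x s) (y t) * w t ∂ν) ∧
      (∀ x y : C(Ω, Y), k x y = star (k y x)) ∧
      (∀ (n : ℕ) (c : Fin n → (Lp ℂ 2 ν →L[ℂ] Lp ℂ 2 ν)) (x : Fin n → C(Ω, Y)),
        (∑ p, ∑ q, star (c p) * k (x p) (x q) * c q).IsPositive) := by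
  obtain ⟨C, hC⟩ := h_bdd
  obtain ⟨K, hK, φ, hφ⟩ := exists_feature_map kt h_herm (fun n α u => (h_pd n α u).1)
  have hφc := feature_continuous kt h_cont φ hφ
  have hM : ∀ u, ‖φ u‖ ≤ Real.sqrt C := by
    intro u
    refine Real.le_sqrt_of_sq_le ?_
    rw [← inner_self_eq_norm_sq (𝕜 := ℂ), hφ]
    exact (Complex.re_le_norm _).trans (hC u u)
  choose A hA using fun x : C(Ω, Y) => exists_analysis ν (fun s => φ (x s))
    (hφc.comp x.continuous) (Real.sqrt C) (fun s => hM _)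
  refine ⟨fun x y => A x ∘L (A y).adjoint, fun x y w => ?_, fun x y => ?_, fun n c x => ?_⟩
  · filter_upwards [hA x ((A y).adjoint w)] with s hs
    rw [ContinuousLinearMap.comp_apply, hs, ContinuousLinearMap.adjoint_inner_right,
      L2.inner_def]
    refine integral_congr_ae ?_
    filter_upwards [hA y (φ (x s))] with t ht
    rw [ht, RCLike.inner_apply, inner_conj_symm, hφ, mul_comm]
  · rw [ContinuousLinearMap.star_eq_adjoint, ContinuousLinearMap.adjoint_comp,
      ContinuousLinearMap.adjoint_adjoint]
  · have h : (∑ p, ∑ q, star (c p) * (A (x p) ∘L (A (x q)).adjoint) * c q) =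
        (∑ p, (A (x p)).adjoint ∘L c p).adjoint ∘L (∑ q, (A (x q)).adjoint ∘L c q) := by
      rw [map_sum]
      ext1 w
      simp [ContinuousLinearMap.adjoint_comp, ContinuousLinearMap.star_eq_adjoint]
      exact Finset.sum_comm
    rw [h]
    exact ContinuousLinearMap.isPositive_adjoint_comp_self _
end
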